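/- Let (Ω, P) be a probability space, k ≥ 1 and m ≥ 1 natural numbers, and let (X_{i,j})_{1 ≤ i ≤ k, 1 ≤ j ≤ m} be mutually independent, integrable, everywhere-nonnegative real random variables such that for each fixed j, the variables X_{1,j}, …, X_{k,j} are identically distributed, and each X_{i,j} has an atomless distribution (its law assigns measure 0 to every singleton). Let p be the unique positive real solution to p^k + p − 1 = 0. Then there exists a real number t such that the adversarial value Z of the fully-symmetric threshold mechanism with threshold t — defined by Z(ω) = max over those i for which the set A_i(ω) = {j : X_{i,j}(ω) ≥ t} is nonempty of min_{j ∈ A_i(ω)} X_{i,j}(ω), and Z(ω) = 0 if A_i(ω) is empty for every i — satisfies E[Z] ≥ p · E[max_{i,j} X_{i,j}]. -/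

import Mathlib

open MeasureTheory ProbabilityTheory

/-!
Choose `t` so that each agent holds no acceptable element with probability `p` (or `t = 0`, should
that `t` be negative), and compare the tails of the mechanism's value and of the optimum at every
level `u > 0`.

Below the threshold, the mechanism exceeds `u` as soon as someone proposes, which has probability
`1 - p ^ k = p`. Above it, an agent's adversarial proposal exceeds `u` if exactly one of their
elements does and all others are below `t`; by independence this is at least `p` times the
probability `a` that one of their elements exceeds `u`, and convexity of `x ↦ x ^ k` gives
`1 - (1 - p * a) ^ k ≥ p * (1 - (1 - a) ^ k)`. Integrating over `u` yields the bound.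
-/

section Convexity

lemma mul_one_sub_one_sub_pow_le {q a : ℝ} (hq : 0 ≤ q) (hq1 : q ≤ 1) (ha : a ≤ 1) (n : ℕ) :
    q * (1 - (1 - a) ^ n) ≤ 1 - (1 - q * a) ^ n := by
  have hconv : (1 - q * a) ^ n ≤ q * (1 - a) ^ n + (1 - q) := by
    simpa [show q * (1 - a) + (1 - q) = 1 - q * a by ring] using
      (convexOn_pow (𝕜 := ℝ) n).2 (Set.mem_Ici.2 (sub_nonneg.2 ha)) (Set.mem_Ici.2 zero_le_one)
        hq (sub_nonneg.2 hq1) (add_sub_cancel q 1)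
  linarith

end Convexity

section Independence

variable {Ω ι κ E : Type*} [MeasurableSpace Ω] {μ : Measure Ω} [MeasurableSpace E]

lemma iIndepFun_curry [Countable ι] [Countable κ] {X : ι → κ → Ω → E}
    (hX : ∀ i j, AEMeasurable (X i j) μ)
    (hindep : iIndepFun (fun q : ι × κ ↦ X q.1 q.2) μ) :
    iIndepFun (fun i ω j ↦ X i j ω) μ := by
  have := hindep.isProbabilityMeasure
  have (i : ι) (j : κ) : IsProbabilityMeasure (μ.map (X i j)) :=
    Measure.isProbabilityMeasure_map (hX i j)
  have hrow (i : ι) : iIndepFun (X i) μ := hindep.precomp (g := (i, ·)) (Prod.mk_right_injective i)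
  rw [iIndepFun_iff_map_fun_eq_infinitePi_map₀' fun i ↦ aemeasurable_pi_lambda _ (hX i)]
  have hpair (q : ι × κ) : AEMeasurable (X q.1 q.2) μ := hX q.1 q.2
  calc μ.map (fun ω i j ↦ X i j ω)
      = (μ.map fun ω (q : ι × κ) ↦ X q.1 q.2 ω).map (MeasurableEquiv.curry ι κ E) :=
        (AEMeasurable.map_map_of_aemeasurable (MeasurableEquiv.curry ι κ E).measurable.aemeasurable
          (aemeasurable_pi_lambda _ hpair)).symm
    _ = Measure.infinitePi fun i ↦ Measure.infinitePi fun j ↦ μ.map (X i j) := by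
        rw [hindep.map_fun_eq_infinitePi_map₀' hpair]
        exact Measure.infinitePi_map_curry fun i j ↦ μ.map (X i j)
    _ = Measure.infinitePi fun i ↦ μ.map fun ω j ↦ X i j ω := by
        simp only [fun i ↦ (hrow i).map_fun_eq_infinitePi_map₀' (hX i)]

lemma measureReal_forall_mem [Fintype ι] {β : ι → Type*} [∀ i, MeasurableSpace (β i)]
    {Y : ∀ i, Ω → β i} (hY : iIndepFun Y μ) {s : ∀ i, Set (β i)}
    (hs : ∀ i, MeasurableSet (s i)) :
    μ.real {ω | ∀ i, Y i ω ∈ s i} = ∏ i, μ.real {ω | Y i ω ∈ s i} := by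
  rw [Set.ofPred_forall]
  simp only [measureReal_def, ← ENNReal.toReal_prod]
  exact congrArg _ (hY.meas_iInter fun i ↦ ⟨s i, hs i, rfl⟩)

lemma measureReal_exists_mem_of_iid [Fintype ι] {Y : ι → Ω → E} (hY : iIndepFun Y μ) {i₀ : ι}
    (hident : ∀ i, IdentDistrib (Y i) (Y i₀) μ μ) {s : Set E} (hs : MeasurableSet s) :
    μ.real {ω | ∃ i, Y i ω ∈ s} = 1 - (1 - μ.real {ω | Y i₀ ω ∈ s}) ^ Fintype.card ι := by
  have := hY.isProbabilityMeasure
  have hnull (i : ι) : NullMeasurableSet {ω | Y i ω ∈ s} μ :=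
    (hident i).aemeasurable_fst.nullMeasurable hs
  have hmiss (i : ι) : μ.real {ω | Y i ω ∈ sᶜ} = 1 - μ.real {ω | Y i₀ ω ∈ s} := by
    have hsame : μ.real {ω | Y i ω ∈ s} = μ.real {ω | Y i₀ ω ∈ s} :=
      congrArg ENNReal.toReal ((hident i).measure_mem_eq hs)
    rw [← hsame]
    exact probReal_compl_eq_one_sub₀ (hnull i)
  have hall := measureReal_forall_mem hY fun _ ↦ hs.compl
  simp only [hmiss, Finset.prod_const, Finset.card_univ] at hall
  have hcompl : {ω | ∀ i, Y i ω ∈ sᶜ} = {ω | ∃ i, Y i ω ∈ s}ᶜ := by ext; simp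
  rw [hcompl, probReal_compl_eq_one_sub₀
    (by rw [Set.ofPred_exists]; exact NullMeasurableSet.iUnion hnull)] at hall
  linarith

section Lone

variable {β : κ → Type*} [∀ j, MeasurableSpace (β j)] {Y : ∀ j, Ω → β j}
  {low high : ∀ j, Set (β j)}

lemma measureReal_forall_mem_mul_le_lone [Finite κ] (hY : iIndepFun Y μ) (j : κ)
    (hlow : ∀ l, MeasurableSet (low l)) (hhigh : MeasurableSet (high j)) :
    μ.real {ω | ∀ l, Y l ω ∈ low l} * μ.real {ω | Y j ω ∈ high j} ≤
      μ.real {ω | Y j ω ∈ high j ∧ ∀ l ≠ j, Y l ω ∈ low l} := by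
  classical
  cases nonempty_fintype κ
  have := hY.isProbabilityMeasure
  have hlone_meas (l : κ) : MeasurableSet (Function.update low j (high j) l) := by
    rcases eq_or_ne l j with rfl | hl
    · simpa using hhigh
    · simpa [hl] using hlow l
  have hlone : {ω | Y j ω ∈ high j ∧ ∀ l ≠ j, Y l ω ∈ low l} =
      {ω | ∀ l, Y l ω ∈ Function.update low j (high j) l} := by
    ext ω
    exact (Function.forall_update_iff low (p := fun l s ↦ Y l ω ∈ s)).symm
  have hrest : ∏ l ∈ Finset.univ.erase j, μ.real {ω | Y l ω ∈ Function.update low j (high j) l} =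
      ∏ l ∈ Finset.univ.erase j, μ.real {ω | Y l ω ∈ low l} :=
    Finset.prod_congr rfl fun l hl ↦ by
      simp only [Function.update_of_ne (Finset.ne_of_mem_erase hl)]
  rw [hlone, measureReal_forall_mem hY hlow, measureReal_forall_mem hY hlone_meas,
    ← Finset.mul_prod_erase _ _ (Finset.mem_univ j),
    ← Finset.mul_prod_erase _ _ (Finset.mem_univ j), hrest, Function.update_self, mul_comm]
  gcongr
  exact mul_le_of_le_one_left (Finset.prod_nonneg fun _ _ ↦ measureReal_nonneg) measureReal_le_one

lemma measureReal_forall_mem_mul_exists_mem_le [Finite κ] (hY : iIndepFun Y μ)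
    (hYm : ∀ j, AEMeasurable (Y j) μ) (hlow : ∀ j, MeasurableSet (low j))
    (hhigh : ∀ j, MeasurableSet (high j)) (hdisj : ∀ j, Disjoint (low j) (high j)) :
    μ.real {ω | ∀ j, Y j ω ∈ low j} * μ.real {ω | ∃ j, Y j ω ∈ high j} ≤
      μ.real {ω | ∃ j, Y j ω ∈ high j ∧ ∀ l ≠ j, Y l ω ∈ low l} := by
  cases nonempty_fintype κ
  have := hY.isProbabilityMeasure
  let lone (j : κ) : Set Ω := {ω | Y j ω ∈ high j ∧ ∀ l ≠ j, Y l ω ∈ low l}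
  have hlone_disj : Pairwise (Function.onFun (AEDisjoint μ) lone) := by
    refine fun i j hij ↦ (Set.disjoint_left.2 fun ω hi hj ↦ ?_).aedisjoint
    exact Set.disjoint_left.1 (hdisj i) (hj.2 i hij) hi.1
  have hlone_meas (j : κ) : NullMeasurableSet (lone j) μ := by
    simp only [lone, Set.ofPred_and, Set.ofPred_forall]
    exact ((hYm j).nullMeasurable (hhigh j)).inter <| .iInter fun l ↦ .iInter fun _ ↦
      (hYm l).nullMeasurable (hlow l)
  rw [Set.ofPred_exists, Set.ofPred_exists]
  calc μ.real {ω | ∀ j, Y j ω ∈ low j} * μ.real (⋃ j, {ω | Y j ω ∈ high j})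
      ≤ μ.real {ω | ∀ j, Y j ω ∈ low j} * ∑ j, μ.real {ω | Y j ω ∈ high j} := by
        gcongr
        exact measureReal_iUnion_fintype_le _
    _ = ∑ j, μ.real {ω | ∀ l, Y l ω ∈ low l} * μ.real {ω | Y j ω ∈ high j} :=
        Finset.mul_sum _ _ _
    _ ≤ ∑ j, μ.real (lone j) :=
        Finset.sum_le_sum fun j _ ↦ measureReal_forall_mem_mul_le_lone hY j hlow (hhigh j)
    _ = μ.real (⋃ j, lone j) := by
        simpa using (measureReal_biUnion_finset₀ (s := Finset.univ) (hlone_disj.set_pairwise _)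
          fun j _ ↦ hlone_meas j).symm

end Lone

end Independence

section Threshold

lemma continuous_cdf (ν : Measure ℝ) [IsProbabilityMeasure ν] [NullSingletonClass ν] :
    Continuous (cdf ν) := by
  refine continuous_iff_continuousAt.2 fun x ↦ ?_
  rw [(monotone_cdf ν).continuousAt_iff_leftLim_eq_rightLim, StieltjesFunction.rightLim_eq]
  refine le_antisymm ((monotone_cdf ν).leftLim_le le_rfl) ?_
  have hjump : ENNReal.ofReal (cdf ν x - Function.leftLim (cdf ν) x) = 0 := by
    rw [← StieltjesFunction.measure_singleton, measure_cdf, measure_singleton]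
  linarith [ENNReal.ofReal_eq_zero.1 hjump]

variable {Ω κ : Type*} [MeasurableSpace Ω] {μ : Measure Ω} {Y : κ → Ω → ℝ}

lemma measureReal_forall_lt_eq_prod_cdf [Fintype κ] (hY : iIndepFun Y μ)
    (hYm : ∀ j, AEMeasurable (Y j) μ) (hatomless : ∀ j x, μ {ω | Y j ω = x} = 0) (t : ℝ) :
    μ.real {ω | ∀ j, Y j ω < t} = ∏ j, cdf (μ.map (Y j)) t := by
  have := hY.isProbabilityMeasure
  refine (measureReal_forall_mem hY fun _ ↦ measurableSet_Iio).trans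
    (Finset.prod_congr rfl fun j _ ↦ ?_)
  have := Measure.isProbabilityMeasure_map (hYm j)
  rw [cdf_eq_real, map_measureReal_apply_of_aemeasurable (hYm j) measurableSet_Iic]
  refine measureReal_congr ?_
  filter_upwards [ae_iff.2 (by simpa using hatomless j t : μ {ω | ¬ Y j ω ≠ t} = 0)] with ω hω
  exact propext (lt_iff_le_and_ne.trans (and_iff_left hω))

lemma exists_nonneg_threshold [Finite κ] (hY : iIndepFun Y μ) (hYm : ∀ j, AEMeasurable (Y j) μ)
    (hatomless : ∀ j x, μ {ω | Y j ω = x} = 0) {p : ℝ} (hp : p < 1) :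
    ∃ t, 0 ≤ t ∧ p ≤ μ.real {ω | ∀ j, Y j ω < t} ∧
      (0 < t → μ.real {ω | ∀ j, Y j ω < t} = p) := by
  cases nonempty_fintype κ
  have := hY.isProbabilityMeasure
  have (j : κ) : IsProbabilityMeasure (μ.map (Y j)) := Measure.isProbabilityMeasure_map (hYm j)
  have (j : κ) : NullSingletonClass (μ.map (Y j)) := ⟨fun x ↦ by
    rw [Measure.map_apply_of_aemeasurable (hYm j) (measurableSet_singleton x)]
    exact hatomless j x⟩
  simp only [measureReal_forall_lt_eq_prod_cdf hY hYm hatomless]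
  set F : ℝ → ℝ := fun t ↦ ∏ j, cdf (μ.map (Y j)) t
  have hF : Continuous F := continuous_finsetProd _ fun j _ ↦ continuous_cdf _
  have hlim : Filter.Tendsto F Filter.atTop (nhds 1) := by
    simpa using tendsto_finsetProd Finset.univ fun j _ ↦ tendsto_cdf_atTop (μ.map (Y j))
  rcases le_or_gt p (F 0) with h0 | h0
  · exact ⟨0, le_rfl, h0, fun h ↦ absurd h (lt_irrefl 0)⟩
  · obtain ⟨b, hb, hb0⟩ :=
      ((hlim.eventually (lt_mem_nhds hp)).and (Filter.eventually_ge_atTop 0)).exists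
    obtain ⟨t, ht, htp⟩ := intermediate_value_Icc hb0 hF.continuousOn ⟨h0.le, hb.le⟩
    exact ⟨t, ht.1, htp.ge, fun _ ↦ htp⟩

end Threshold

section TailComparison

variable {Ω : Type*} [MeasurableSpace Ω] {μ : Measure Ω} {f g : Ω → ℝ}

lemma integrableOn_measureReal_lt (hg : Integrable g μ) (hg0 : 0 ≤ᵐ[μ] g) :
    IntegrableOn (fun u ↦ μ.real {ω | u < g ω}) (Set.Ioi 0) := by
  have hanti : Antitone fun u ↦ μ {ω | u < g ω} := fun _ _ huv ↦
    measure_mono fun _ hω ↦ huv.trans_lt hω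
  refine integrable_toReal_of_lintegral_ne_top hanti.measurable.aemeasurable ?_
  rw [← lintegral_eq_lintegral_meas_lt μ hg0 hg.aemeasurable]
  exact hg.lintegral_lt_top.ne

lemma mul_integral_le_of_mul_measureReal_lt_le (hf : Integrable f μ)
    (hg : Integrable g μ) (hg0 : 0 ≤ᵐ[μ] g) {c : ℝ} (hc : 0 ≤ c)
    (htail : ∀ u > 0, c * μ.real {ω | u < f ω} ≤ μ.real {ω | u < g ω}) :
    c * ∫ ω, f ω ∂μ ≤ ∫ ω, g ω ∂μ := by
  have hpos : 0 ≤ᵐ[μ] fun ω ↦ max (f ω) 0 := .of_forall fun _ ↦ le_max_right _ _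
  have hpos_tail {u : ℝ} (hu : 0 < u) : {ω | u < max (f ω) 0} = {ω | u < f ω} := by
    simp [hu.le.not_gt]
  calc c * ∫ ω, f ω ∂μ ≤ c * ∫ ω, max (f ω) 0 ∂μ := by
        gcongr
        · exact hf.pos_part
        · exact fun _ ↦ le_max_left _ _
    _ = ∫ u in Set.Ioi 0, c * μ.real {ω | u < max (f ω) 0} := by
        rw [hf.pos_part.integral_eq_integral_meas_lt hpos, integral_const_mul]
    _ ≤ ∫ u in Set.Ioi 0, μ.real {ω | u < g ω} := by
        refine setIntegral_mono_on ((integrableOn_measureReal_lt hf.pos_part hpos).const_mul c)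
          (integrableOn_measureReal_lt hg hg0) measurableSet_Ioi fun u hu ↦ ?_
        rw [hpos_tail hu]
        exact htail u hu
    _ = ∫ ω, g ω ∂μ := (hg.integral_eq_integral_meas_lt hg0).symm

end TailComparison

section Mechanism

variable {ι κ : Type*}

/-- The principal's non-delegated optimum when agent `i` holds the values `x i`. -/
noncomputable def optimum (x : ι → κ → ℝ) : ℝ :=
  sSup {y | ∃ i j, y = x i j}

/-- The principal's value in the threshold mechanism with threshold `t` when agent `i` holds the
values `x i` and adversarially proposes the least acceptable one. It is `0` when nobody has an
acceptable element because `sSup ∅ = 0` in `ℝ`. -/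
noncomputable def thresholdValue (t : ℝ) (x : ι → κ → ℝ) : ℝ :=
  sSup {v | ∃ i, (∃ j, t ≤ x i j) ∧ v = sInf {y | ∃ j, t ≤ x i j ∧ y = x i j}}

/-- The holdings from which an adversarial agent facing threshold `t` makes a proposal, of value
greater than `u`. -/
def proposesAbove (κ : Type*) (t u : ℝ) : Set (κ → ℝ) :=
  {y | (∃ j, t ≤ y j) ∧ ∀ j, t ≤ y j → u < y j}

lemma lt_sSup_iff_of_nonneg {s : Set ℝ} (hs : BddAbove s) {u : ℝ} (hu : 0 ≤ u) :
    u < sSup s ↔ ∃ x ∈ s, u < x := by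
  rcases s.eq_empty_or_nonempty with rfl | hne
  · simp [hu]
  · exact lt_csSup_iff hs hne

lemma abs_sSup_le {s : Set ℝ} {a : ℝ} (ha : 0 ≤ a) (hs : ∀ x ∈ s, |x| ≤ a) : |sSup s| ≤ a := by
  rcases s.eq_empty_or_nonempty with rfl | ⟨x, hx⟩
  · simpa using ha
  · have hbdd : BddAbove s := ⟨a, fun y hy ↦ (abs_le.1 (hs y hy)).2⟩
    exact abs_le.2 ⟨(abs_le.1 (hs x hx)).1.trans (le_csSup hbdd hx),
      csSup_le ⟨x, hx⟩ fun y hy ↦ (abs_le.1 (hs y hy)).2⟩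

lemma abs_sInf_le {s : Set ℝ} {a : ℝ} (ha : 0 ≤ a) (hs : ∀ x ∈ s, |x| ≤ a) : |sInf s| ≤ a := by
  rw [Real.sInf_def, abs_neg]
  exact abs_sSup_le ha fun x hx ↦ by simpa using hs (-x) hx

lemma thresholdValue_nonneg {t : ℝ} (ht : 0 ≤ t) (x : ι → κ → ℝ) : 0 ≤ thresholdValue t x := by
  refine Real.sSup_nonneg ?_
  rintro _ ⟨i, -, rfl⟩
  refine Real.sInf_nonneg ?_
  rintro _ ⟨j, hj, rfl⟩
  exact ht.trans hj

variable {t u : ℝ}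

lemma mem_proposesAbove_iff [Finite κ] (y : κ → ℝ) :
    y ∈ proposesAbove κ t u ↔ (∃ j, t ≤ y j) ∧ u < sInf {z | ∃ j, t ≤ y j ∧ z = y j} := by
  refine and_congr_right fun ⟨j, hj⟩ ↦ ?_
  have hfin : {z | ∃ j, t ≤ y j ∧ z = y j}.Finite :=
    (Set.finite_range y).subset fun _ ⟨j, _, h⟩ ↦ ⟨j, h.symm⟩
  rw [hfin.lt_csInf_iff ⟨_, j, hj, rfl⟩]
  exact ⟨fun h _ ⟨j, hj, hz⟩ ↦ hz ▸ h j hj, fun h j hj ↦ h _ ⟨j, hj, rfl⟩⟩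

lemma mem_proposesAbove_of_lone (htu : t ≤ u) {y : κ → ℝ}
    (hy : ∃ j, u < y j ∧ ∀ l ≠ j, y l < t) : y ∈ proposesAbove κ t u := by
  obtain ⟨j, hj, hrest⟩ := hy
  refine ⟨⟨j, htu.trans hj.le⟩, fun l hl ↦ ?_⟩
  rcases eq_or_ne l j with rfl | hlj
  · exact hj
  · exact absurd hl (hrest l hlj).not_ge

lemma proposesAbove_of_lt (hut : u < t) : proposesAbove κ t u = {y | ∀ j, y j < t}ᶜ := by
  ext y
  simp only [Set.mem_compl_iff, Set.mem_ofPred_eq, not_forall, not_lt]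
  exact and_iff_left fun _ hj ↦ hut.trans_le hj

lemma measurableSet_proposesAbove [Countable κ] : MeasurableSet (proposesAbove κ t u) := by
  have hacc (j : κ) : Measurable fun y : κ → ℝ ↦ t ≤ y j :=
    measurableSet_setOfPred.1 (measurableSet_le measurable_const (measurable_pi_apply j))
  have hgt (j : κ) : Measurable fun y : κ → ℝ ↦ u < y j :=
    measurableSet_setOfPred.1 (measurableSet_lt measurable_const (measurable_pi_apply j))
  exact measurableSet_setOfPred.2
    ((Measurable.exists hacc).and (Measurable.forall fun j ↦ (hacc j).imp (hgt j)))

section Finite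

variable [Finite ι] [Finite κ]

lemma lt_optimum_iff (hu : 0 ≤ u) (x : ι → κ → ℝ) : u < optimum x ↔ ∃ i j, u < x i j := by
  have hfin : {y | ∃ i j, y = x i j}.Finite :=
    (Set.finite_range fun q : ι × κ ↦ x q.1 q.2).subset fun _ ⟨i, j, h⟩ ↦ ⟨(i, j), h.symm⟩
  rw [optimum, lt_sSup_iff_of_nonneg hfin.bddAbove hu]
  exact ⟨fun ⟨_, ⟨i, j, rfl⟩, h⟩ ↦ ⟨i, j, h⟩, fun ⟨i, j, h⟩ ↦ ⟨_, ⟨i, j, rfl⟩, h⟩⟩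

lemma lt_thresholdValue_iff (hu : 0 ≤ u) (x : ι → κ → ℝ) :
    u < thresholdValue t x ↔ ∃ i, x i ∈ proposesAbove κ t u := by
  have hfin : {v | ∃ i, (∃ j, t ≤ x i j) ∧ v = sInf {y | ∃ j, t ≤ x i j ∧ y = x i j}}.Finite :=
    (Set.finite_range fun i ↦ sInf {y | ∃ j, t ≤ x i j ∧ y = x i j}).subset
      fun _ ⟨i, _, h⟩ ↦ ⟨i, h.symm⟩
  rw [thresholdValue, lt_sSup_iff_of_nonneg hfin.bddAbove hu]
  simp only [mem_proposesAbove_iff]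
  exact ⟨fun ⟨_, ⟨i, hi, hv⟩, h⟩ ↦ ⟨i, hi, hv ▸ h⟩, fun ⟨i, hi, h⟩ ↦ ⟨_, ⟨i, hi, rfl⟩, h⟩⟩

lemma measurable_optimum : Measurable (optimum : (ι → κ → ℝ) → ℝ) := by
  have hsup (x : ι → κ → ℝ) : optimum x = ⨆ q : ι × κ, x q.1 q.2 :=
    congrArg sSup <| Set.ext fun y ↦ by simp [eq_comm]
  simp only [funext hsup]
  exact .iSup fun q ↦ by fun_prop

lemma measurable_thresholdValue (ht : 0 ≤ t) :
    Measurable (thresholdValue t : (ι → κ → ℝ) → ℝ) := by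
  refine measurable_of_Ioi fun u ↦ ?_
  rcases lt_or_ge u 0 with hu | hu
  · convert MeasurableSet.univ
    exact Set.eq_univ_of_forall fun x ↦ hu.trans_le (thresholdValue_nonneg ht x)
  · have hpre : (thresholdValue t : (ι → κ → ℝ) → ℝ) ⁻¹' Set.Ioi u =
        ⋃ i, (· i) ⁻¹' proposesAbove κ t u := by
      ext x
      simpa using lt_thresholdValue_iff hu x
    rw [hpre]
    exact .iUnion fun i ↦ measurable_pi_apply i measurableSet_proposesAbove

end Finite

section Fintype

variable [Fintype ι] [Fintype κ]

lemma abs_le_sum_abs (x : ι → κ → ℝ) (i : ι) (j : κ) : |x i j| ≤ ∑ i, ∑ j, |x i j| :=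
  (Finset.single_le_sum (f := fun j ↦ |x i j|) (fun _ _ ↦ abs_nonneg _) (Finset.mem_univ j)).trans
    (Finset.single_le_sum (f := fun i ↦ ∑ j, |x i j|)
      (fun _ _ ↦ Finset.sum_nonneg fun _ _ ↦ abs_nonneg _) (Finset.mem_univ i))

lemma abs_optimum_le_sum_abs (x : ι → κ → ℝ) : |optimum x| ≤ ∑ i, ∑ j, |x i j| := by
  refine abs_sSup_le (by positivity) ?_
  rintro _ ⟨i, j, rfl⟩
  exact abs_le_sum_abs x i j

lemma abs_thresholdValue_le_sum_abs (x : ι → κ → ℝ) :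
    |thresholdValue t x| ≤ ∑ i, ∑ j, |x i j| := by
  refine abs_sSup_le (by positivity) ?_
  rintro _ ⟨i, -, rfl⟩
  refine abs_sInf_le (by positivity) ?_
  rintro _ ⟨j, -, rfl⟩
  exact abs_le_sum_abs x i j

variable {Ω : Type*} [MeasurableSpace Ω] {μ : Measure Ω}

lemma integrable_comp_of_abs_le_sum_abs {X : ι → κ → Ω → ℝ} (hX : ∀ i j, Integrable (X i j) μ)
    {φ : (ι → κ → ℝ) → ℝ} (hφ : Measurable φ) (hbound : ∀ x, |φ x| ≤ ∑ i, ∑ j, |x i j|) :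
    Integrable (fun ω ↦ φ fun i j ↦ X i j ω) μ := by
  have hsum : Integrable (fun ω ↦ ∑ i, ∑ j, |X i j ω|) μ :=
    integrable_finsetSum _ fun i _ ↦ integrable_finsetSum _ fun j _ ↦ (hX i j).abs
  have hXm : AEMeasurable (fun ω i j ↦ X i j ω) μ :=
    aemeasurable_pi_lambda _ fun i ↦ aemeasurable_pi_lambda _ fun j ↦ (hX i j).aemeasurable
  exact hsum.mono' (hφ.comp_aemeasurable hXm).aestronglyMeasurable
    (.of_forall fun ω ↦ hbound _)

end Fintype

end Mechanism

section Tails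

variable {Ω ι κ : Type*} [MeasurableSpace Ω] {μ : Measure Ω} [Finite κ]
  {Y : ι → Ω → κ → ℝ} {i₀ : ι} {t u : ℝ}

lemma measureReal_lt_optimum [Fintype ι] (hY : iIndepFun Y μ)
    (hident : ∀ i, IdentDistrib (Y i) (Y i₀) μ μ) (hu : 0 ≤ u) :
    μ.real {ω | u < optimum fun i ↦ Y i ω} =
      1 - (1 - μ.real {ω | ∃ j, u < Y i₀ ω j}) ^ Fintype.card ι := by
  have hmeas : MeasurableSet {y : κ → ℝ | ∃ j, u < y j} := by
    rw [Set.ofPred_exists]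
    exact .iUnion fun j ↦ measurableSet_lt measurable_const (measurable_pi_apply j)
  simp only [lt_optimum_iff hu]
  exact measureReal_exists_mem_of_iid hY hident hmeas

lemma measureReal_lt_thresholdValue [Fintype ι] (hY : iIndepFun Y μ)
    (hident : ∀ i, IdentDistrib (Y i) (Y i₀) μ μ) (hu : 0 ≤ u) :
    μ.real {ω | u < thresholdValue t fun i ↦ Y i ω} =
      1 - (1 - μ.real {ω | Y i₀ ω ∈ proposesAbove κ t u}) ^ Fintype.card ι := by
  simp only [lt_thresholdValue_iff hu]
  exact measureReal_exists_mem_of_iid hY hident measurableSet_proposesAbove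

lemma measureReal_lt_thresholdValue_of_lt [Fintype ι] (hY : iIndepFun Y μ)
    (hident : ∀ i, IdentDistrib (Y i) (Y i₀) μ μ) (hu : 0 ≤ u) (hut : u < t) :
    μ.real {ω | u < thresholdValue t fun i ↦ Y i ω} =
      1 - μ.real {ω | ∀ j, Y i₀ ω j < t} ^ Fintype.card ι := by
  have := hY.isProbabilityMeasure
  have hmeas : MeasurableSet {y : κ → ℝ | ∀ j, y j < t} := by
    rw [Set.ofPred_forall]
    exact .iInter fun j ↦ measurableSet_lt (measurable_pi_apply j) measurable_const
  have hpropose : μ.real {ω | Y i₀ ω ∈ proposesAbove κ t u} =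
      1 - μ.real {ω | ∀ j, Y i₀ ω j < t} := by
    rw [proposesAbove_of_lt hut]
    exact probReal_compl_eq_one_sub₀ ((hident i₀).aemeasurable_fst.nullMeasurable hmeas)
  rw [measureReal_lt_thresholdValue hY hident hu, hpropose, sub_sub_cancel]

lemma mul_measureReal_lt_optimum_le_of_le [Finite ι] (hY : iIndepFun Y μ)
    (hident : ∀ i, IdentDistrib (Y i) (Y i₀) μ μ) (hcoord : iIndepFun (fun j ω ↦ Y i₀ ω j) μ)
    (hu : 0 ≤ u) (htu : t ≤ u) :
    μ.real {ω | ∀ j, Y i₀ ω j < t} * μ.real {ω | u < optimum fun i ↦ Y i ω} ≤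
      μ.real {ω | u < thresholdValue t fun i ↦ Y i ω} := by
  cases nonempty_fintype ι
  have := hY.isProbabilityMeasure
  set q := μ.real {ω | ∀ j, Y i₀ ω j < t}
  set a := μ.real {ω | ∃ j, u < Y i₀ ω j}
  set b := μ.real {ω | Y i₀ ω ∈ proposesAbove κ t u}
  have hlone : q * a ≤ b :=
    (measureReal_forall_mem_mul_exists_mem_le hcoord
      (fun j ↦ aemeasurable_pi_iff.1 (hident i₀).aemeasurable_fst j)
      (fun _ ↦ measurableSet_Iio) (fun _ ↦ measurableSet_Ioi)
      (fun _ ↦ Set.Iio_disjoint_Ioi_of_le htu)).trans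
    (measureReal_mono fun _ ↦ mem_proposesAbove_of_lone htu)
  calc q * μ.real {ω | u < optimum fun i ↦ Y i ω}
      = q * (1 - (1 - a) ^ Fintype.card ι) := by rw [measureReal_lt_optimum hY hident hu]
    _ ≤ 1 - (1 - q * a) ^ Fintype.card ι :=
        mul_one_sub_one_sub_pow_le measureReal_nonneg measureReal_le_one measureReal_le_one _
    _ ≤ 1 - (1 - b) ^ Fintype.card ι := by
        have : 0 ≤ 1 - b := sub_nonneg.2 measureReal_le_one
        gcongr
    _ = μ.real {ω | u < thresholdValue t fun i ↦ Y i ω} :=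
        (measureReal_lt_thresholdValue hY hident hu).symm

lemma mul_measureReal_lt_optimum_le [Fintype ι] (hY : iIndepFun Y μ)
    (hident : ∀ i, IdentDistrib (Y i) (Y i₀) μ μ) (hcoord : iIndepFun (fun j ω ↦ Y i₀ ω j) μ)
    {p : ℝ} (hp : 0 ≤ p) (hroot : p ^ Fintype.card ι + p ≤ 1)
    (hp_le : p ≤ μ.real {ω | ∀ j, Y i₀ ω j < t})
    (hp_eq : 0 < t → μ.real {ω | ∀ j, Y i₀ ω j < t} = p) (hu : 0 ≤ u) :
    p * μ.real {ω | u < optimum fun i ↦ Y i ω} ≤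
      μ.real {ω | u < thresholdValue t fun i ↦ Y i ω} := by
  have := hY.isProbabilityMeasure
  rcases lt_or_ge u t with hut | htu
  · rw [measureReal_lt_thresholdValue_of_lt hY hident hu hut, hp_eq (hu.trans_lt hut)]
    exact (mul_le_of_le_one_right hp measureReal_le_one).trans (le_sub_iff_add_le'.2 hroot)
  · exact (mul_le_mul_of_nonneg_right hp_le measureReal_nonneg).trans
      (mul_measureReal_lt_optimum_le_of_le hY hident hcoord hu htu)

end Tails

theorem atomless_adversarial_lower_bound_general {Ω ι κ : Type*} [MeasurableSpace Ω]
    {μ : Measure Ω} [Fintype ι] [Finite κ] {X : ι → κ → Ω → ℝ}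
    (hindep : iIndepFun (fun q : ι × κ ↦ X q.1 q.2) μ) (hint : ∀ i j, Integrable (X i j) μ)
    (hident : ∀ i i' j, IdentDistrib (X i j) (X i' j) μ μ)
    (hatomless : ∀ i j x, μ {ω | X i j ω = x} = 0)
    {p : ℝ} (hp : 0 < p) (hroot : p ^ Fintype.card ι + p = 1) :
    ∃ t, p * ∫ ω, optimum (fun i j ↦ X i j ω) ∂μ ≤
      ∫ ω, thresholdValue t (fun i j ↦ X i j ω) ∂μ := by
  cases nonempty_fintype κ
  have := hindep.isProbabilityMeasure
  have hp1 : p < 1 := by linarith [pow_pos hp (Fintype.card ι)]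
  obtain ⟨i₀⟩ : Nonempty ι := by
    by_contra h
    simp [not_nonempty_iff.1 h, hp.ne'] at hroot
  have hmeas (i : ι) (j : κ) : AEMeasurable (X i j) μ := (hint i j).aemeasurable
  have hagents : iIndepFun (fun i ω j ↦ X i j ω) μ := iIndepFun_curry hmeas hindep
  have hwithin (i : ι) : iIndepFun (X i) μ :=
    hindep.precomp (g := (i, ·)) (Prod.mk_right_injective i)
  have hident_agents (i : ι) : IdentDistrib (fun ω j ↦ X i j ω) (fun ω j ↦ X i₀ j ω) μ μ :=
    .pi (hident i i₀) (hwithin i) (hwithin i₀)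
  obtain ⟨t, ht, hp_le, hp_eq⟩ :=
    exists_nonneg_threshold (hwithin i₀) (hmeas i₀) (hatomless i₀) hp1
  refine ⟨t, mul_integral_le_of_mul_measureReal_lt_le
    (integrable_comp_of_abs_le_sum_abs hint measurable_optimum abs_optimum_le_sum_abs)
    (integrable_comp_of_abs_le_sum_abs hint (measurable_thresholdValue ht)
      abs_thresholdValue_le_sum_abs)
    (.of_forall fun _ ↦ thresholdValue_nonneg ht _) hp.le fun u hu ↦ ?_⟩
  exact mul_measureReal_lt_optimum_le hagents hident_agents (hwithin i₀) hp.le hroot.le hp_le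
    hp_eq hu.le

/-- Atomless adversarial lower bound for agent-symmetric instances: there is a threshold `t`
such that the fully-symmetric threshold mechanism with threshold `t`, against adversarial
agents, achieves a `p`-fraction of the principal's non-delegated optimum, where `p` is the
unique positive root of `p ^ k + p - 1 = 0`. The mechanism's adversarial value is the largest,
over agents `i` holding at least one element of value `≥ t`, of the least such value held by
agent `i` (recall that in Mathlib `sSup ∅ = 0` for real numbers). -/
theorem atomless_adversarial_lower_bound
    {Ω : Type*} [MeasureSpace Ω] [IsProbabilityMeasure (ℙ : Measure Ω)]
    (k m : ℕ) (hk : 1 ≤ k) (hm : 1 ≤ m)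
    (X : Fin k → Fin m → Ω → ℝ)
    (hmeas : ∀ i j, Measurable (X i j))
    (hindep : iIndepFun
      (fun q : Fin k × Fin m => X q.1 q.2) ℙ)
    (hint : ∀ i j, Integrable (X i j) ℙ)
    (hnonneg : ∀ i j ω, 0 ≤ X i j ω)
    (hident : ∀ (i i' : Fin k) (j : Fin m), IdentDistrib (X i j) (X i' j) ℙ ℙ)
    (hatomless : ∀ (i : Fin k) (j : Fin m) (x : ℝ), ℙ {ω | X i j ω = x} = 0)
    (p : ℝ) (hp : 0 < p) (hroot : p ^ k + p = 1) :
    ∃ t : ℝ,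
      p * ∫ ω, sSup {x | ∃ i j, x = X i j ω} ∂ℙ ≤
        ∫ ω, sSup {v | ∃ i : Fin k, (∃ j, t ≤ X i j ω) ∧
          v = sInf {x | ∃ j, t ≤ X i j ω ∧ x = X i j ω}} ∂ℙ :=
  atomless_adversarial_lower_bound_general hindep hint hident hatomless hp (by simpa using hroot)
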